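/- A bivariate copula D is stochastically increasing (i.e. u ↦ D(v,u) is concave on [0,1] for every v ∈ [0,1]) if and only if there exist a bivariate copula C and a derivative family (h_v)_{v∈[0,1]} for C such that D(v,u) = ∫₀¹ min(h_v(t), u) dt for all (v,u) ∈ [0,1]². In other words, the class of upper products C ∨ Π of copulas with the independence copula coincides with the class of stochastically increasing copulas. -/

import Mathlib

/-!
For fixed `v`, a concave `D v` is the integral of its decreasing right derivative `g`. Since `g` is
decreasing, each superlevel set `{t ≤ g}` is an initial segment of `(0, 1)`, so its part in `(0, u)`
has length `min (h v t) u`, where `h v t` is the length of the whole superlevel set. The layer cake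
formula then reads `D v u = ∫₀¹ min (h v t) u dt`, and the 2-increasing property makes `h v t`
increasing in `v`. Conversely, `u ↦ min (h v t) u` is concave, and so are its integrals over `t`.
-/

open MeasureTheory Set

noncomputable section

/-- A bivariate copula: a function `[0,1]² → [0,1]` (encoded on `ℝ × ℝ`, with all
conditions imposed on `[0,1]²`) with the copula boundary conditions and the
2-increasing property. -/
def IsCopula (C : ℝ → ℝ → ℝ) : Prop :=
  (∀ v ∈ Icc (0:ℝ) 1, ∀ u ∈ Icc (0:ℝ) 1, C v u ∈ Icc (0:ℝ) 1) ∧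
  (∀ v ∈ Icc (0:ℝ) 1, C v 0 = 0) ∧
  (∀ u ∈ Icc (0:ℝ) 1, C 0 u = 0) ∧
  (∀ v ∈ Icc (0:ℝ) 1, C v 1 = v) ∧
  (∀ u ∈ Icc (0:ℝ) 1, C 1 u = u) ∧
  (∀ v₁ v₂ u₁ u₂ : ℝ, 0 ≤ v₁ → v₁ ≤ v₂ → v₂ ≤ 1 → 0 ≤ u₁ → u₁ ≤ u₂ → u₂ ≤ 1 →
    0 ≤ C v₂ u₂ - C v₁ u₂ - C v₂ u₁ + C v₁ u₁)

/-- A derivative family `(h_v)_{v ∈ [0,1]}` for a copula `C`: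
each `h_v : [0,1] → [0,1]` is Lebesgue measurable, `C(v,u) = ∫₀ᵘ h_v(t) dt`,
`v ↦ h_v(t)` is increasing, and `∫₀¹ h_v(t) dt = v`. -/
def IsDerivFamily (C : ℝ → ℝ → ℝ) (h : ℝ → ℝ → ℝ) : Prop :=
  (∀ v ∈ Icc (0:ℝ) 1, Measurable (h v)) ∧
  (∀ v ∈ Icc (0:ℝ) 1, ∀ t ∈ Icc (0:ℝ) 1, h v t ∈ Icc (0:ℝ) 1) ∧
  (∀ v ∈ Icc (0:ℝ) 1, ∀ u ∈ Icc (0:ℝ) 1, C v u = ∫ t in (0:ℝ)..u, h v t) ∧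
  (∀ t ∈ Icc (0:ℝ) 1, MonotoneOn (fun v => h v t) (Icc (0:ℝ) 1)) ∧
  (∀ v ∈ Icc (0:ℝ) 1, (∫ t in (0:ℝ)..1, h v t) = v)

open scoped Topology

section ConcaveIntegral

variable {α : Type*} [MeasurableSpace α] {μ : Measure α}

lemma concaveOn_integral {E : Type*} [AddCommMonoid E] [SMul ℝ E] {s : Set E} {F : E → α → ℝ}
    (hs : Convex ℝ s) (hF : ∀ᵐ t ∂μ, ConcaveOn ℝ s fun u => F u t)
    (hint : ∀ u ∈ s, Integrable (F u) μ) : ConcaveOn ℝ s fun u => ∫ t, F u t ∂μ := by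
  refine ⟨hs, fun x hx y hy a b ha hb hab => ?_⟩
  have hx' := (hint x hx).const_mul a
  have hy' := (hint y hy).const_mul b
  calc a • ∫ t, F x t ∂μ + b • ∫ t, F y t ∂μ = ∫ t, a * F x t + b * F y t ∂μ := by
        rw [integral_add hx' hy', integral_const_mul, integral_const_mul, smul_eq_mul, smul_eq_mul]
    _ ≤ ∫ t, F (a • x + b • y) t ∂μ := by
        refine integral_mono_ae (hx'.add hy') (hint _ (hs hx hy ha hb hab)) ?_
        filter_upwards [hF] with t ht using ht.2 hx hy ha hb hab

lemma concaveOn_integral_min [IsFiniteMeasure μ] {f : α → ℝ} (hf : Integrable f μ) :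
    ConcaveOn ℝ univ fun u => ∫ t, min (f t) u ∂μ :=
  concaveOn_integral convex_univ
    (.of_forall fun t => (concaveOn_const (f t) convex_univ).inf (concaveOn_id convex_univ))
    fun u _ => hf.inf (integrable_const u)

end ConcaveIntegral

section SuperlevelMeasure

variable {α : Type*} [MeasurableSpace α] {μ : Measure α} {s : Set α} {f g : α → ℝ}

/-- The measure of the superlevel set `{t ≤ f}` in `s` as a function of the level `t`. For
decreasing `f` on an interval, it is the generalised inverse of `f`, measured from the left
endpoint. It is real-valued, hence meaningful only where the superlevel sets have finite measure. -/
def superlevelMeasure (μ : Measure α) (s : Set α) (f : α → ℝ) (t : ℝ) : ℝ :=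
  μ.real {x ∈ s | t ≤ f x}

lemma superlevelMeasure_le (hμ : μ s ≠ ⊤) (t : ℝ) : superlevelMeasure μ s f t ≤ μ.real s :=
  measureReal_mono (sep_subset _ _) hμ

lemma antitone_superlevelMeasure (hμ : μ s ≠ ⊤) : Antitone (superlevelMeasure μ s f) :=
  fun _ _ h => measureReal_mono (fun _ hx => ⟨hx.1, h.trans hx.2⟩)
    (measure_ne_top_of_subset (sep_subset _ _) hμ)

lemma superlevelMeasure_mono (hμ : μ s ≠ ⊤) (hfg : ∀ x ∈ s, f x ≤ g x) (t : ℝ) :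
    superlevelMeasure μ s f t ≤ superlevelMeasure μ s g t :=
  measureReal_mono (fun x hx => ⟨hx.1, hx.2.trans (hfg x hx.1)⟩)
    (measure_ne_top_of_subset (sep_subset _ _) hμ)

lemma setIntegral_eq_integral_superlevelMeasure {M : ℝ} (hs : MeasurableSet s)
    (hf : IntegrableOn f s μ) (hfM : ∀ x ∈ s, f x ∈ Icc 0 M) :
    ∫ x in s, f x ∂μ = ∫ t in Ioc 0 M, superlevelMeasure μ s f t := by
  rw [hf.integral_eq_integral_Ioc_meas_le (ae_restrict_of_forall_mem hs fun x hx => (hfM x hx).1)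
    (ae_restrict_of_forall_mem hs fun x hx => (hfM x hx).2)]
  simp only [measureReal_restrict_apply' hs, ofPred_inter_eq_sep, superlevelMeasure]

lemma measureReal_inter_eq_min {A B : Set α} (hA : μ A ≠ ⊤) (hB : μ B ≠ ⊤)
    (h : A ⊆ B ∨ B ⊆ A) : μ.real (A ∩ B) = min (μ.real A) (μ.real B) := by
  rcases h with h | h
  · rw [inter_eq_left.2 h, min_eq_left (measureReal_mono h hB)]
  · rw [inter_eq_right.2 h, min_eq_right (measureReal_mono h hA)]

lemma superlevelMeasure_inter_Iio [LinearOrder α] (hf : AntitoneOn f s) (hμ : μ s ≠ ⊤)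
    (u : α) (t : ℝ) :
    superlevelMeasure μ (s ∩ Iio u) f t
      = min (superlevelMeasure μ s f t) (μ.real (s ∩ Iio u)) := by
  have hnested : {x ∈ s | t ≤ f x} ⊆ s ∩ Iio u ∨ s ∩ Iio u ⊆ {x ∈ s | t ≤ f x} := by
    by_cases! h : ∃ x ∈ s, t ≤ f x ∧ u ≤ x
    · obtain ⟨x, hx, htx, hux⟩ := h
      exact .inr fun y hy => ⟨hy.1, htx.trans (hf hy.1 hx (hy.2.le.trans hux))⟩
    · exact .inl fun x hx => ⟨hx.1, h x hx.1 hx.2⟩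
  rw [superlevelMeasure, superlevelMeasure,
    ← measureReal_inter_eq_min (measure_ne_top_of_subset (sep_subset _ _) hμ)
      (measure_ne_top_of_subset inter_subset_left hμ) hnested]
  congr 1
  ext x
  simp only [mem_ofPred_eq, mem_inter_iff]
  tauto

end SuperlevelMeasure

section RightDeriv

variable {S : Set ℝ} {f g : ℝ → ℝ} {x : ℝ}

/-- The right derivative of `f` at `x`; the junk value is `0` where `f` has none. -/
def rightDeriv (f : ℝ → ℝ) (x : ℝ) : ℝ :=
  derivWithin f (Ioi x) x

lemma rightDeriv_nonneg_of_monotoneOn (hf : MonotoneOn f S) (hS : S ∈ 𝓝 x) :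
    0 ≤ rightDeriv f x := by
  rw [rightDeriv, ← derivWithin_inter hS]
  exact (hf.mono inter_subset_right).derivWithin_nonneg

lemma rightDeriv_le_rightDeriv (hf : DifferentiableWithinAt ℝ f (Ioi x) x)
    (hg : DifferentiableWithinAt ℝ g (Ioi x) x) (hfg : MonotoneOn (g - f) S) (hS : S ∈ 𝓝 x) :
    rightDeriv f x ≤ rightDeriv g x := by
  have h := rightDeriv_nonneg_of_monotoneOn hfg hS
  rwa [rightDeriv, derivWithin_sub hg hf, sub_nonneg] at h

lemma rightDeriv_le_one (hf : DifferentiableWithinAt ℝ f (Ioi x) x)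
    (hfid : MonotoneOn (id - f) S) (hS : S ∈ 𝓝 x) : rightDeriv f x ≤ 1 :=
  (rightDeriv_le_rightDeriv hf differentiableWithinAt_id hfid hS).trans_eq
    (derivWithin_id x _ (uniqueDiffWithinAt_Ioi x))

lemma differentiableWithinAt_Ioi_of_concaveOn (hf : ConcaveOn ℝ S f) (hx : x ∈ interior S) :
    DifferentiableWithinAt ℝ f (Ioi x) x :=
  differentiableWithinAt_neg_iff.1 (hf.neg.differentiableWithinAt_Ioi_of_mem_interior hx)

lemma antitoneOn_rightDeriv_of_concaveOn (hf : ConcaveOn ℝ S f) :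
    AntitoneOn (rightDeriv f) (interior S) := by
  intro x hx y hy hxy
  simpa [rightDeriv, derivWithin.neg] using hf.neg.monotoneOn_rightDeriv hx hy hxy

lemma sub_eq_integral_min_superlevelMeasure_rightDeriv {a b M u : ℝ} (hf : ConcaveOn ℝ (Icc a b) f)
    (hcont : ContinuousOn f (Icc a b)) (hM : ∀ x ∈ Ioo a b, rightDeriv f x ∈ Icc 0 M)
    (hu : u ∈ Icc a b) :
    f u - f a
      = ∫ t in Ioc 0 M, min (superlevelMeasure volume (Ioo a b) (rightDeriv f) t) (u - a) := by
  have hsub : Ioo a u ⊆ Ioo a b := Ioo_subset_Ioo_right hu.2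
  have hcontu : ContinuousOn f (Icc a u) := hcont.mono (Icc_subset_Icc_right hu.2)
  have hderiv : ∀ x ∈ Ioo a u, HasDerivWithinAt f (rightDeriv f x) (Ioi x) x := fun x hx =>
    (differentiableWithinAt_Ioi_of_concaveOn hf
      (by simpa only [interior_Icc] using hsub hx)).hasDerivWithinAt
  have hint : IntegrableOn (rightDeriv f) (Ioc a u) :=
    intervalIntegral.integrableOn_deriv_right_of_nonneg hcontu hderiv
      fun x hx => (hM x (hsub hx)).1
  have hanti : AntitoneOn (rightDeriv f) (Ioo a b) := by
    simpa only [interior_Icc] using antitoneOn_rightDeriv_of_concaveOn hf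
  have hIoo : Ioo a b ∩ Iio u = Ioo a u := by rw [Ioo_inter_Iio, min_eq_right hu.2]
  calc f u - f a = ∫ x in Ioo a u, rightDeriv f x := by
        rw [← integral_Ioc_eq_integral_Ioo, ← intervalIntegral.integral_of_le hu.1,
          intervalIntegral.integral_eq_sub_of_hasDeriv_right_of_le hu.1 hcontu hderiv
            ((intervalIntegrable_iff_integrableOn_Ioc_of_le hu.1).2 hint)]
    _ = ∫ t in Ioc 0 M, superlevelMeasure volume (Ioo a u) (rightDeriv f) t :=
        setIntegral_eq_integral_superlevelMeasure measurableSet_Ioo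
          (hint.mono_set Ioo_subset_Ioc_self) fun x hx => hM x (hsub hx)
    _ = ∫ t in Ioc 0 M, min (superlevelMeasure volume (Ioo a b) (rightDeriv f) t) (u - a) := by
        simp_rw [← hIoo, superlevelMeasure_inter_Iio hanti measure_Ioo_lt_top.ne, hIoo,
          Real.volume_real_Ioo_of_le hu.1]

lemma lipschitzOnWith_one_of_monotoneOn_id_sub (hf : MonotoneOn f S)
    (hfid : MonotoneOn (id - f) S) : LipschitzOnWith 1 f S := by
  refine LipschitzOnWith.of_le_add fun x hx y hy => ?_
  rcases le_total x y with hxy | hyx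
  · exact (hf hx hy hxy).trans (le_add_of_nonneg_right dist_nonneg)
  · have h : y - f y ≤ x - f x := hfid hy hx hyx
    linarith [Real.dist_eq x y, le_abs_self (x - y)]

end RightDeriv

namespace IsDerivFamily

variable {C h : ℝ → ℝ → ℝ} {v w x y : ℝ}

lemma intervalIntegrable (hC : IsDerivFamily C h) (hv : v ∈ Icc (0 : ℝ) 1)
    (hx : x ∈ Icc (0 : ℝ) 1) (hy : y ∈ Icc (0 : ℝ) 1) :
    IntervalIntegrable (h v) volume x y := by
  have hint : IntegrableOn (h v) (Icc 0 1) :=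
    Integrable.of_mem_Icc 0 1 (hC.1 v hv).aemeasurable
      (ae_restrict_of_forall_mem measurableSet_Icc (hC.2.1 v hv))
  exact (hint.mono_set (ordConnected_Icc.uIcc_subset hx hy)).intervalIntegrable

lemma sub_eq_integral (hC : IsDerivFamily C h) (hv : v ∈ Icc (0 : ℝ) 1)
    (hx : x ∈ Icc (0 : ℝ) 1) (hy : y ∈ Icc (0 : ℝ) 1) :
    C v y - C v x = ∫ t in x..y, h v t := by
  have h0 : (0 : ℝ) ∈ Icc (0 : ℝ) 1 := left_mem_Icc.2 zero_le_one
  rw [hC.2.2.1 v hv y hy, hC.2.2.1 v hv x hx, intervalIntegral.integral_interval_sub_left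
    (hC.intervalIntegrable hv h0 hy) (hC.intervalIntegrable hv h0 hx)]

lemma sub_le_sub (hC : IsDerivFamily C h) (hv : v ∈ Icc (0 : ℝ) 1) (hw : w ∈ Icc (0 : ℝ) 1)
    (hx : x ∈ Icc (0 : ℝ) 1) (hy : y ∈ Icc (0 : ℝ) 1) (hvw : v ≤ w) (hxy : x ≤ y) :
    C v y - C v x ≤ C w y - C w x := by
  rw [hC.sub_eq_integral hv hx hy, hC.sub_eq_integral hw hx hy]
  exact intervalIntegral.integral_mono_on hxy (hC.intervalIntegrable hv hx hy)
    (hC.intervalIntegrable hw hx hy)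
    fun t ht => hC.2.2.2.1 t ⟨hx.1.trans ht.1, ht.2.trans hy.2⟩ hv hw hvw

lemma sub_mem_Icc (hC : IsDerivFamily C h) (hv : v ∈ Icc (0 : ℝ) 1)
    (hx : x ∈ Icc (0 : ℝ) 1) (hy : y ∈ Icc (0 : ℝ) 1) (hxy : x ≤ y) :
    C v y - C v x ∈ Icc 0 (y - x) := by
  have hmem : ∀ t ∈ Icc x y, h v t ∈ Icc (0 : ℝ) 1 := fun t ht =>
    hC.2.1 v hv t ⟨hx.1.trans ht.1, ht.2.trans hy.2⟩
  rw [hC.sub_eq_integral hv hx hy]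
  refine ⟨intervalIntegral.integral_nonneg hxy fun t ht => (hmem t ht).1, ?_⟩
  simpa using intervalIntegral.integral_mono_on hxy (hC.intervalIntegrable hv hx hy)
    (intervalIntegrable_const (c := (1 : ℝ))) fun t ht => (hmem t ht).2

theorem isCopula (hC : IsDerivFamily C h) : IsCopula C := by
  have h0 : (0 : ℝ) ∈ Icc (0 : ℝ) 1 := left_mem_Icc.2 zero_le_one
  have h1 : (1 : ℝ) ∈ Icc (0 : ℝ) 1 := right_mem_Icc.2 zero_le_one
  have hleft : ∀ v ∈ Icc (0 : ℝ) 1, C v 0 = 0 := fun v hv => by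
    rw [hC.2.2.1 v hv 0 h0, intervalIntegral.integral_same]
  have hright : ∀ v ∈ Icc (0 : ℝ) 1, C v 1 = v := fun v hv => by
    rw [hC.2.2.1 v hv 1 h1, hC.2.2.2.2 v hv]
  refine ⟨fun v hv u hu => ?_, hleft, fun u hu => ?_, hright, fun u hu => ?_,
    fun v₁ v₂ u₁ u₂ hv₁ hv hv₂ hu₁ hu hu₂ => ?_⟩
  · have hCu := hC.sub_mem_Icc hv h0 hu hu.1
    rw [hleft v hv, sub_zero, sub_zero] at hCu
    exact ⟨hCu.1, hCu.2.trans hu.2⟩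
  · have hlow := (hC.sub_mem_Icc h0 h0 hu hu.1).1
    have hupp := (hC.sub_mem_Icc h0 hu h1 hu.2).1
    linarith [hleft 0 h0, hright 0 h0]
  · have hupp := (hC.sub_mem_Icc h1 h0 hu hu.1).2
    have hlow := (hC.sub_mem_Icc h1 hu h1 hu.2).2
    linarith [hleft 1 h1, hright 1 h1]
  · linarith [hC.sub_le_sub ⟨hv₁, hv.trans hv₂⟩ ⟨hv₁.trans hv, hv₂⟩ ⟨hu₁, hu.trans hu₂⟩
      ⟨hu₁.trans hu, hu₂⟩ hv hu]

lemma concaveOn_upperProduct_Pi (hC : IsDerivFamily C h) (hv : v ∈ Icc (0 : ℝ) 1) :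
    ConcaveOn ℝ univ fun u => ∫ t in (0 : ℝ)..1, min (h v t) u := by
  have hint := hC.intervalIntegrable hv (left_mem_Icc.2 zero_le_one) (right_mem_Icc.2 zero_le_one)
  simpa only [intervalIntegral.integral_of_le zero_le_one]
    using concaveOn_integral_min hint.1

end IsDerivFamily

/-- The generalised inverse `t ↦ |{s ∈ (0, 1) | t ≤ ∂⁺D(v, s)}|` of the right derivative of `D v`.
For a stochastically increasing copula `D` it is the derivative family whose upper product with
the independence copula is `D`. -/
def rightDerivInverse (D : ℝ → ℝ → ℝ) (v : ℝ) : ℝ → ℝ :=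
  superlevelMeasure volume (Ioo 0 1) (rightDeriv (D v))

lemma rightDerivInverse_mem_Icc (D : ℝ → ℝ → ℝ) (v t : ℝ) :
    rightDerivInverse D v t ∈ Icc (0 : ℝ) 1 :=
  ⟨measureReal_nonneg, (superlevelMeasure_le measure_Ioo_lt_top.ne t).trans_eq (by simp)⟩

namespace IsCopula

variable {D : ℝ → ℝ → ℝ} {v w u : ℝ}

lemma monotoneOn_sub (hD : IsCopula D) (hv : 0 ≤ v) (hvw : v ≤ w) (hw : w ≤ 1) :
    MonotoneOn (D w - D v) (Icc 0 1) := by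
  intro x hx y hy hxy
  have h := hD.2.2.2.2.2 v w x y hv hvw hw hx.1 hxy hy.2
  simp only [Pi.sub_apply]
  linarith

lemma monotoneOn (hD : IsCopula D) (hv : v ∈ Icc (0 : ℝ) 1) : MonotoneOn (D v) (Icc 0 1) :=
  (hD.monotoneOn_sub le_rfl hv.1 hv.2).congr fun u hu => by simp [hD.2.2.1 u hu]

lemma monotoneOn_id_sub (hD : IsCopula D) (hv : v ∈ Icc (0 : ℝ) 1) :
    MonotoneOn (id - D v) (Icc 0 1) :=
  (hD.monotoneOn_sub hv.1 hv.2 le_rfl).congr fun u hu => by simp [hD.2.2.2.2.1 u hu]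

lemma rightDeriv_mem_Icc (hD : IsCopula D) (hv : v ∈ Icc (0 : ℝ) 1)
    (hconc : ConcaveOn ℝ (Icc 0 1) (D v)) (hu : u ∈ Ioo (0 : ℝ) 1) :
    rightDeriv (D v) u ∈ Icc (0 : ℝ) 1 :=
  ⟨rightDeriv_nonneg_of_monotoneOn (hD.monotoneOn hv) (Icc_mem_nhds hu.1 hu.2),
    rightDeriv_le_one (differentiableWithinAt_Ioi_of_concaveOn hconc (by rwa [interior_Icc]))
      (hD.monotoneOn_id_sub hv) (Icc_mem_nhds hu.1 hu.2)⟩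

lemma rightDeriv_mono (hD : IsCopula D) (hv : 0 ≤ v) (hvw : v ≤ w) (hw : w ≤ 1)
    (hconcv : ConcaveOn ℝ (Icc 0 1) (D v)) (hconcw : ConcaveOn ℝ (Icc 0 1) (D w))
    (hu : u ∈ Ioo (0 : ℝ) 1) : rightDeriv (D v) u ≤ rightDeriv (D w) u := by
  have hu' : u ∈ interior (Icc (0 : ℝ) 1) := by rwa [interior_Icc]
  exact rightDeriv_le_rightDeriv (differentiableWithinAt_Ioi_of_concaveOn hconcv hu')
    (differentiableWithinAt_Ioi_of_concaveOn hconcw hu') (hD.monotoneOn_sub hv hvw hw)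
    (Icc_mem_nhds hu.1 hu.2)

lemma eq_integral_min_rightDerivInverse (hD : IsCopula D) (hv : v ∈ Icc (0 : ℝ) 1)
    (hconc : ConcaveOn ℝ (Icc 0 1) (D v)) (hu : u ∈ Icc (0 : ℝ) 1) :
    D v u = ∫ t in (0 : ℝ)..1, min (rightDerivInverse D v t) u := by
  have hlip : LipschitzOnWith 1 (D v) (Icc 0 1) :=
    lipschitzOnWith_one_of_monotoneOn_id_sub (hD.monotoneOn hv) (hD.monotoneOn_id_sub hv)
  have h := sub_eq_integral_min_superlevelMeasure_rightDeriv hconc hlip.continuousOn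
    (fun _ hs => hD.rightDeriv_mem_Icc hv hconc hs) hu
  rwa [hD.2.1 v hv, sub_zero, sub_zero, ← intervalIntegral.integral_of_le zero_le_one] at h

lemma integral_rightDerivInverse (hD : IsCopula D) (hv : v ∈ Icc (0 : ℝ) 1)
    (hconc : ConcaveOn ℝ (Icc 0 1) (D v)) : ∫ t in (0 : ℝ)..1, rightDerivInverse D v t = v := by
  have h := hD.eq_integral_min_rightDerivInverse hv hconc (right_mem_Icc.2 zero_le_one)
  simpa only [hD.2.2.2.1 v hv, min_eq_left (rightDerivInverse_mem_Icc D v _).2] using h.symm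

theorem isDerivFamily_rightDerivInverse (hD : IsCopula D)
    (hSI : ∀ v ∈ Icc (0 : ℝ) 1, ConcaveOn ℝ (Icc 0 1) (D v)) :
    IsDerivFamily (fun v u => ∫ t in (0 : ℝ)..u, rightDerivInverse D v t)
      (rightDerivInverse D) :=
  ⟨fun _ _ => (antitone_superlevelMeasure measure_Ioo_lt_top.ne).measurable,
    fun v _ t _ => rightDerivInverse_mem_Icc D v t, fun _ _ _ _ => rfl,
    fun t _ v hv w hw hvw => superlevelMeasure_mono measure_Ioo_lt_top.ne
      (fun _ hs => hD.rightDeriv_mono hv.1 hvw hw.2 (hSI v hv) (hSI w hw) hs) t,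
    fun v hv => hD.integral_rightDerivInverse hv (hSI v hv)⟩

end IsCopula

/-- A bivariate copula `D` is stochastically increasing
(`u ↦ D(v,u)` concave on `[0,1]` for every `v`) if and only if there are a copula
`C` and a derivative family `(h_v)` for `C` with
`D(v,u) = ∫₀¹ min(h_v(t), u) dt` on `[0,1]²`; i.e. the class of upper products
`C ∨ Π` coincides with the class of stochastically increasing copulas. -/
theorem SI_iff_upperProduct_with_Pi (D : ℝ → ℝ → ℝ) (hD : IsCopula D) :
    (∀ v ∈ Icc (0:ℝ) 1, ConcaveOn ℝ (Icc (0:ℝ) 1) (fun u => D v u))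
      ↔ ∃ C h : ℝ → ℝ → ℝ, IsCopula C ∧ IsDerivFamily C h ∧
          ∀ v ∈ Icc (0:ℝ) 1, ∀ u ∈ Icc (0:ℝ) 1,
            D v u = ∫ t in (0:ℝ)..1, min (h v t) u := by
  constructor
  · intro hSI
    have hfamily := hD.isDerivFamily_rightDerivInverse hSI
    exact ⟨_, rightDerivInverse D, hfamily.isCopula, hfamily,
      fun v hv u hu => hD.eq_integral_min_rightDerivInverse hv (hSI v hv) hu⟩
  · rintro ⟨C, h, -, hfamily, hDh⟩ v hv
    have hconc := (hfamily.concaveOn_upperProduct_Pi hv).subset (subset_univ _) (convex_Icc 0 1)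
    exact hconc.congr fun u hu => (hDh v hv u hu).symm

end
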